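/- For every integer n ≥ 1, C^2_{2,n} = Σ_{j=0}^{n} binom(n+j−1, 2j) = F_{2n−1}, where F_m denotes the m-th Fibonacci number (F_1 = F_2 = 1, F_m = F_{m−1} + F_{m−2}). -/

import Mathlib

/-- Full binary trees (every internal node has exactly two children). -/
inductive BTree : Type
  | leaf : BTree
  | node : BTree → BTree → BTree
deriving DecidableEq

namespace BTree

/-- Number of leaves of a full binary tree. -/
def numLeaves : BTree → ℕ
  | leaf => 1
  | node l r => l.numLeaves + r.numLeaves

/-- The list of pairs (left depth, right depth) of the leaves, in preorder. -/
def leafDepths : BTree → List (ℕ × ℕ)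
  | leaf => [(0, 0)]
  | node l r =>
      (l.leafDepths.map fun p => (p.1 + 1, p.2)) ++ (r.leafDepths.map fun p => (p.1, p.2 + 1))

/-- The left depth sequence `ld(t)` of the leaves of `t`, in preorder. -/
def ld (t : BTree) : List ℕ := t.leafDepths.map Prod.fst

/-- The right depth sequence `rd(t)` of the leaves of `t`, in preorder. -/
def rd (t : BTree) : List ℕ := t.leafDepths.map Prod.snd

end BTree

/-- `b ~^d c` : the sequences have equal length and agree at every position where
either entry is `< d`. -/
def DepthEq (d : ℕ) : List ℕ → List ℕ → Prop :=
  List.Forall₂ (fun a b => min a b < d → a = b)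

/-- `b ~_k c` : entrywise congruence mod `k` (and equal length). -/
def ModListEq (k : ℕ) : List ℕ → List ℕ → Prop :=
  List.Forall₂ (fun a b => a % k = b % k)

/-- The relation `t ~ t'` iff `ld(t) ~^d ld(t')` and `rd(t) ~^e rd(t')`. -/
def DeRel (d e : ℕ) (t t' : BTree) : Prop :=
  DepthEq d t.ld t'.ld ∧ DepthEq e t.rd t'.rd

/-- The relation `t ~ t'` iff `ld(t) ~_k^d ld(t')` (i.e. `ld(t) ~_k ld(t')` and
`ld(t) ~^d ld(t')`). -/
def DkRel (d k : ℕ) (t t' : BTree) : Prop :=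
  ModListEq k t.ld t'.ld ∧ DepthEq d t.ld t'.ld

/-- `T_n`: full binary trees with `n+1` leaves. -/
def Tn (n : ℕ) : Type := {t : BTree // t.numLeaves = n + 1}

/-- `C^{d,e}_n`: the number of equivalence classes of the relation `DeRel d e` on `T_n`. -/
noncomputable def Cde (d e n : ℕ) : ℕ :=
  Nat.card (Quot (fun t t' : Tn n => DeRel d e t.1 t'.1))

/-- `C^d_{k,n}`: the number of equivalence classes of `ld(t) ~_k^d ld(t')` on `T_n`. -/
noncomputable def Cdk (d k n : ℕ) : ℕ :=
  Nat.card (Quot (fun t t' : Tn n => DkRel d k t.1 t'.1))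

namespace Stmt19

/-- Valid left-depth sequences. -/
inductive V : List ℕ → Prop
  | base : V [0]
  | cons (x y : ℕ) (L : List ℕ) : V (y :: L) → 1 ≤ x → x ≤ y + 1 → V (x :: y :: L)

lemma V_append {L M : List ℕ} (hL : V L) (hM : V M) : V (L.map (· + 1) ++ M) := by
  induction hL with
  | base =>
    cases hM with
    | base => exact V.cons _ _ _ V.base (by simp) (by simp)
    | cons x y L h h1 h2 => exact V.cons _ _ _ (V.cons x y L h h1 h2) (by simp) (by simp)
  | cons x y L h h1 h2 ih =>
    exact V.cons _ _ _ ih (by simp) (by simpa using h2)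

lemma ld_leaf : BTree.leaf.ld = [0] := rfl

lemma ld_node (l r : BTree) : (BTree.node l r).ld = l.ld.map (· + 1) ++ r.ld := by
  simp [BTree.ld, BTree.leafDepths, Function.comp_def]

lemma ld_length (t : BTree) : t.ld.length = t.numLeaves := by
  induction t with
  | leaf => rfl
  | node l r hl hr => simp [ld_node, BTree.numLeaves, hl, hr]

lemma V_ld (t : BTree) : V t.ld := by
  induction t with
  | leaf => exact V.base
  | node l r hl hr => rw [ld_node]; exact V_append hl hr

lemma exists_prepend (t : BTree) : ∀ (x y : ℕ) (L : List ℕ), t.ld = y :: L → 1 ≤ x → x ≤ y + 1 →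
    ∃ t' : BTree, t'.ld = x :: y :: L := by
  induction t with
  | leaf =>
    intro x y L h h1 h2
    refine ⟨.node .leaf .leaf, ?_⟩
    simp only [ld_leaf, List.cons.injEq] at h
    obtain ⟨rfl, rfl⟩ := h
    have : x = 1 := by omega
    subst this
    simp [ld_node, ld_leaf]
  | node l r hl hr =>
    intro x y L h h1 h2
    by_cases hx : x = 1
    · subst hx
      refine ⟨.node .leaf (.node l r), ?_⟩
      rw [ld_node, h]; simp [ld_leaf]
    · rcases hll : l.ld with _ | ⟨z, M⟩
      · have := V_ld l
        rw [hll] at this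
        cases this
      · rw [ld_node, hll] at h
        simp only [List.map_cons, List.cons_append, List.cons.injEq] at h
        obtain ⟨rfl, rfl⟩ := h
        obtain ⟨l', hl'⟩ := hl (x - 1) z M hll (by omega) (by omega)
        refine ⟨.node l' r, ?_⟩
        rw [ld_node, hl']
        have : x - 1 + 1 = x := by omega
        simp [this]

lemma exists_tree {L : List ℕ} (h : V L) : ∃ t : BTree, t.ld = L := by
  induction h with
  | base => exact ⟨.leaf, rfl⟩
  | cons x y L h h1 h2 ih =>
    obtain ⟨t, ht⟩ := ih
    exact exists_prepend t x y L ht h1 h2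

/-- Reduction of entries. -/
def red (x : ℕ) : ℕ := if x < 2 then x else 2 + x % 2

lemma red_eq_iff (a b : ℕ) : red a = red b ↔ (a % 2 = b % 2 ∧ (min a b < 2 → a = b)) := by
  unfold red
  split_ifs <;> omega

lemma dkrel_iff_aux (L M : List ℕ) : (ModListEq 2 L M ∧ DepthEq 2 L M) ↔ L.map red = M.map red := by
  unfold ModListEq DepthEq
  induction L generalizing M with
  | nil => cases M <;> simp
  | cons a L ih =>
    cases M with
    | nil => simp
    | cons b M =>
      simp only [List.forall₂_cons, List.map_cons, List.cons.injEq, ← ih, red_eq_iff]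
      tauto

/-- All words, and words starting with 2 or 3. -/
def words : ℕ → Finset (List ℕ) × Finset (List ℕ)
  | 0 => ({[1, 0]}, ∅)
  | m + 1 =>
    let p := words m
    let b := p.1.image (List.cons 2) ∪ p.2.image (List.cons 3)
    (p.1.image (List.cons 1) ∪ b, b)

lemma card_words (m : ℕ) :
    (words m).1.card = Nat.fib (2 * m + 1) ∧ (words m).2.card = Nat.fib (2 * m) := by
  induction m with
  | zero => simp [words]
  | succ m ih =>
    obtain ⟨h1, h2⟩ := ih
    have hi : ∀ k : ℕ, Function.Injective (List.cons k) := fun k => List.cons_injective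
    have hb : (words (m + 1)).2.card = Nat.fib (2 * (m + 1)) := by
      simp only [words]
      rw [Finset.card_union_of_disjoint, Finset.card_image_of_injective _ (hi _),
        Finset.card_image_of_injective _ (hi _), h1, h2]
      · rw [show 2 * (m + 1) = 2 * m + 2 by ring, Nat.fib_add_two]; ring
      · rw [Finset.disjoint_left]
        intro w
        simp only [Finset.mem_image]
        rintro ⟨a, _, rfl⟩ ⟨b, _, h⟩
        simp at h
    refine ⟨?_, hb⟩
    have : (words (m + 1)).1 = (words m).1.image (List.cons 1) ∪ (words (m + 1)).2 := rfl
    rw [this, Finset.card_union_of_disjoint, Finset.card_image_of_injective _ (hi _), h1, hb]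
    · rw [show 2 * (m + 1) + 1 = (2 * m + 1) + 2 by ring, Nat.fib_add_two]; rfl
    · rw [Finset.disjoint_left]
      intro w
      simp only [words, Finset.mem_image, Finset.mem_union]
      rintro ⟨a, _, rfl⟩ (⟨b, _, h⟩ | ⟨b, _, h⟩) <;> simp at h

lemma mem_words {L : List ℕ} (h : V L) : ∀ m x M, L = x :: M → L.length = m + 2 →
    1 ≤ x ∧ L.map red ∈ (words m).1 ∧ (2 ≤ x → L.map red ∈ (words m).2) := by
  induction h with
  | base => intro m x M _ h; simp at h
  | cons x y L h h1 h2 ih =>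
    intro m x' M he hl
    simp only [List.cons.injEq] at he
    obtain ⟨rfl, rfl⟩ := he
    refine ⟨h1, ?_⟩
    cases m with
    | zero =>
      have hL : L = [] := by
        apply List.length_eq_zero_iff.1
        simpa using hl
      subst hL
      cases h with
      | base =>
        have : x = 1 := by omega
        subst this
        simp [words, red]
    | succ m =>
      obtain ⟨hy, i1, i2⟩ := ih m y L rfl (by simpa using hl)
      have hb : 2 ≤ x → (x :: y :: L).map red ∈ (words (m + 1)).2 := by
        intro hx
        simp only [words, Finset.mem_union, Finset.mem_image]
        rcases Nat.mod_two_eq_zero_or_one x with h0 | h0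
        · left
          refine ⟨_, i1, ?_⟩
          have : red x = 2 := by unfold red; split_ifs <;> omega
          rw [List.map_cons (l := y :: L), this]
        · right
          refine ⟨_, i2 (by omega), ?_⟩
          have : red x = 3 := by unfold red; split_ifs <;> omega
          rw [List.map_cons (l := y :: L), this]
      refine ⟨?_, hb⟩
      have e : (words (m + 1)).1 = (words m).1.image (List.cons 1) ∪ (words (m + 1)).2 := rfl
      rw [e, Finset.mem_union]
      by_cases hx : 2 ≤ x
      · exact Or.inr (hb hx)
      · left
        have : x = 1 := by omega
        subst this
        exact Finset.mem_image.2 ⟨_, i1, by simp [red]⟩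

lemma of_mem_words (m : ℕ) : ∀ w : List ℕ,
    (w ∈ (words m).1 → ∃ x M, V (x :: M) ∧ (x :: M).map red = w ∧ 1 ≤ x ∧ M.length = m + 1) ∧
    (w ∈ (words m).2 → ∃ x M, V (x :: M) ∧ (x :: M).map red = w ∧ 2 ≤ x ∧ M.length = m + 1) := by
  induction m with
  | zero =>
    intro w
    simp only [words, Finset.mem_singleton, Finset.notMem_empty, false_imp_iff, and_true]
    rintro rfl
    exact ⟨1, [0], V.cons _ _ _ V.base (by simp) (by simp), by simp [red], by simp, by simp⟩
  | succ m ih =>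
    intro w
    have hb : w ∈ (words (m + 1)).2 →
        ∃ x M, V (x :: M) ∧ (x :: M).map red = w ∧ 2 ≤ x ∧ M.length = m + 1 + 1 := by
      simp only [words, Finset.mem_union, Finset.mem_image]
      rintro (⟨v, hv, rfl⟩ | ⟨v, hv, rfl⟩)
      · obtain ⟨y, M, hV, rfl, hy, hM⟩ := (ih v).1 hv
        refine ⟨y + y % 2, y :: M, V.cons _ _ _ hV (by omega) (by omega), ?_, by omega, by simp [hM]⟩
        have : red (y + y % 2) = 2 := by unfold red; split_ifs <;> omega
        rw [List.map_cons (l := y :: M), this]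
      · obtain ⟨y, M, hV, rfl, hy, hM⟩ := (ih v).2 hv
        refine ⟨y + (y + 1) % 2, y :: M, V.cons _ _ _ hV (by omega) (by omega), ?_, by omega,
          by simp [hM]⟩
        have : red (y + (y + 1) % 2) = 3 := by unfold red; split_ifs <;> omega
        rw [List.map_cons (l := y :: M), this]
    refine ⟨?_, hb⟩
    have e : (words (m + 1)).1 = (words m).1.image (List.cons 1) ∪ (words (m + 1)).2 := rfl
    rw [e, Finset.mem_union]
    rintro (h | h)
    · obtain ⟨v, hv, rfl⟩ := Finset.mem_image.1 h
      obtain ⟨y, M, hV, rfl, hy, hM⟩ := (ih v).1 hv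
      exact ⟨1, y :: M, V.cons _ _ _ hV (by omega) (by omega), by simp [red], by omega, by simp [hM]⟩
    · obtain ⟨x, M, a, b, c, d⟩ := hb h
      exact ⟨x, M, a, b, by omega, d⟩

lemma Cdk_eq (m : ℕ) : Cdk 2 2 (m + 1) = Nat.fib (2 * m + 1) := by
  rw [← (card_words m).1, ← Nat.card_eq_finsetCard]
  have hm : ∀ t : Tn (m + 1), t.1.ld.map red ∈ (words m).1 := by
    intro t
    have hl : t.1.ld.length = m + 2 := by rw [ld_length, t.2]
    rcases hd : t.1.ld with _ | ⟨x, M⟩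
    · rw [hd] at hl; simp at hl
    · rw [← hd]
      exact (mem_words (V_ld t.1) m x M hd hl).2.1
  let f : Quot (fun t t' : Tn (m + 1) => DkRel 2 2 t.1 t'.1) → (words m).1 :=
    Quot.lift (fun t => ⟨t.1.ld.map red, hm t⟩)
      (fun a b hab => Subtype.ext ((dkrel_iff_aux _ _).1 hab))
  refine Nat.card_congr (Equiv.ofBijective f ⟨?_, ?_⟩)
  · rintro ⟨a⟩ ⟨b⟩ hab
    exact Quot.sound ((dkrel_iff_aux _ _).2 (congrArg Subtype.val hab))
  · rintro ⟨w, hw⟩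
    obtain ⟨x, M, hV, hr, -, hM⟩ := (of_mem_words m w).1 hw
    obtain ⟨t, ht⟩ := exists_tree hV
    refine ⟨Quot.mk _ ⟨t, ?_⟩, ?_⟩
    · rw [← ld_length, ht]; simp [hM]
    · apply Subtype.ext
      change t.ld.map red = w
      rw [ht, hr]

lemma sums (m : ℕ) : ∀ N, m < N →
    ∑ j ∈ Finset.range N, (m + j).choose (2 * j) = Nat.fib (2 * m + 1) ∧
    ∑ j ∈ Finset.range N, (m + j).choose (2 * j + 1) = Nat.fib (2 * m) := by
  induction m with
  | zero =>
    intro N hN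
    obtain ⟨N, rfl⟩ : ∃ k, N = k + 1 := ⟨N - 1, by omega⟩
    constructor
    · rw [Finset.sum_range_succ', Finset.sum_eq_zero]
      · simp
      · intro i _; exact Nat.choose_eq_zero_of_lt (by omega)
    · rw [Finset.sum_eq_zero]
      · simp
      · intro i _; exact Nat.choose_eq_zero_of_lt (by omega)
  | succ m ih =>
    have ht : ∀ N, m < N →
        ∑ j ∈ Finset.range N, (m + 1 + j).choose (2 * j + 1) = Nat.fib (2 * (m + 1)) := by
      intro N hN
      rw [show 2 * (m + 1) = 2 * m + 2 by ring, Nat.fib_add_two, ← (ih N hN).1, ← (ih N hN).2,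
        ← Finset.sum_add_distrib]
      refine Finset.sum_congr rfl fun j _ => ?_
      rw [show m + 1 + j = (m + j) + 1 by ring, Nat.choose_succ_succ, add_comm]
    intro N hN
    refine ⟨?_, ht N (by omega)⟩
    rw [show 2 * (m + 1) + 1 = (2 * m + 1) + 2 by ring, Nat.fib_add_two, ← (ih N (by omega)).1,
      show 2 * m + 1 + 1 = 2 * (m + 1) by ring]
    obtain ⟨N, rfl⟩ : ∃ k, N = k + 1 := ⟨N - 1, by omega⟩
    rw [← ht N (by omega), Finset.sum_range_succ', Finset.sum_range_succ' _ N,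
      add_right_comm (∑ k ∈ Finset.range N, (m + (k + 1)).choose (2 * (k + 1))), ← Finset.sum_add_distrib]
    congr 1
    · refine Finset.sum_congr rfl fun j _ => ?_
      rw [show m + 1 + (j + 1) = (m + 1 + j) + 1 by ring, show 2 * (j + 1) = (2 * j + 1) + 1 by ring,
        Nat.choose_succ_succ, add_comm, show m + (j + 1) = m + 1 + j by ring]
    · simp

end Stmt19

/-- for `n ≥ 1`, `C^2_{2,n} = Σ_{j=0}^{n} binom(n+j-1, 2j) = F_{2n-1}`
(Fibonacci numbers with `F_1 = F_2 = 1`, matching `Nat.fib`). -/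
theorem stmt19 (n : ℕ) (hn : 1 ≤ n) :
    Cdk 2 2 n = ∑ j ∈ Finset.range (n + 1), (n + j - 1).choose (2 * j) ∧
    Cdk 2 2 n = Nat.fib (2 * n - 1) := by
  obtain ⟨m, rfl⟩ : ∃ k, n = k + 1 := ⟨n - 1, by omega⟩
  have h := Stmt19.Cdk_eq m
  have h2 := (Stmt19.sums m (m + 1 + 1) (by omega)).1
  refine ⟨?_, ?_⟩
  · rw [h, ← h2]
    refine Finset.sum_congr rfl fun j _ => ?_
    rw [show m + 1 + j - 1 = m + j by omega]
  · rw [h, show 2 * (m + 1) - 1 = 2 * m + 1 by omega]
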